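/- For every z > −1 and every k ≤ n, the polynomial ∂_z^k L_n(x,z) (the k-th derivative of the generalized Laguerre polynomial with respect to its parameter), viewed as a polynomial in x, has degree n − k and all of its roots are real and simple. -/

import Mathlib

open Polynomial Finset

/-- The generalized Laguerre polynomial as a bivariate polynomial: the outer variable is
the parameter z, the inner coefficients are polynomials in x. -/
noncomputable def laguerreBiv (n : Nat) : Polynomial (Polynomial Real) :=
  Finset.sum (Finset.range (n + 1)) fun k =>
    Polynomial.C (Polynomial.C ((-1 : Real) ^ k / ((k.factorial : Real) * ((n - k).factorial : Real))) *
        Polynomial.X ^ k) *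
      Finset.prod (Finset.Icc (k + 1) n) fun j =>
        (Polynomial.X + Polynomial.C (Polynomial.C (j : Real)))

/-- The k-th derivative in the parameter z of the Laguerre polynomial, specialized at a
real value z, as a polynomial in x. -/
noncomputable def laguerreDz (n k : Nat) (z : Real) : Polynomial Real :=
  (Polynomial.derivative^[k] (laguerreBiv n)).eval (Polynomial.C z)

/-!
Fix `x > 0`. As a polynomial in `z`, `L_n(x, z)` is the Charlier polynomial `c_n(z + n)` with
parameter `x`, whose zeros are all real and simple. By Rolle's theorem the same is true of its
derivatives in `z`, so by Laguerre's inequality `p p'' ≤ p' ^ 2` the values of `∂_z^(k-1) L_n` and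
`∂_z^(k+1) L_n` have opposite signs wherever `∂_z^k L_n` vanishes.

Now fix `z > -1` and let `x` vary. By this sign condition the polynomials `∂_z^(n-j) L_n(·, z)`,
`0 ≤ j ≤ n`, form a Sturm sequence on `(0, ∞)`: going from one member to the next, the zeros
interlace, and the `j`-th member has `j` distinct zeros. The Charlier polynomials, up to sign, are a
Sturm sequence as well, thanks to their three-term recurrence.
-/

/-! ### Real polynomials with only real and simple zeros -/

/-- A real polynomial all of whose complex zeros are real and simple. Nonzero constants qualify,
and so does the zero polynomial, whose multiset of roots is empty by convention. -/
def IsSimplyRealRooted (p : ℝ[X]) : Prop :=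
  p.Splits ∧ p.roots.Nodup

theorem isSimplyRealRooted_iff_card_toFinset_roots {p : ℝ[X]} :
    IsSimplyRealRooted p ↔ p.roots.toFinset.card = p.natDegree := by
  rw [IsSimplyRealRooted, splits_iff_card_roots, ← Multiset.toFinset_card_eq_card_iff_nodup]
  have hle : p.roots.toFinset.card ≤ p.roots.card := Multiset.toFinset_card_le _
  have hdeg : p.roots.card ≤ p.natDegree := p.card_roots'
  lia

theorem isSimplyRealRooted_of_injective {p : ℝ[X]} {m : ℕ} {t : Fin m → ℝ}
    (ht : Function.Injective t) (hroot : ∀ i, p.eval (t i) = 0) (hdeg : p.natDegree ≤ m) :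
    IsSimplyRealRooted p := by
  rw [isSimplyRealRooted_iff_card_toFinset_roots]
  rcases eq_or_ne p 0 with rfl | hp
  · simp
  have hsub : univ.image t ⊆ p.roots.toFinset := by
    intro x hx
    obtain ⟨i, -, rfl⟩ := mem_image.mp hx
    simpa [hp] using hroot i
  have hm : m ≤ p.roots.toFinset.card := by
    simpa [card_image_of_injective _ ht] using card_le_card hsub
  have hle : p.roots.toFinset.card ≤ p.natDegree :=
    (Multiset.toFinset_card_le _).trans p.card_roots'
  lia

namespace IsSimplyRealRooted

variable {p : ℝ[X]}

theorem card_roots (hp : IsSimplyRealRooted p) : p.roots.card = p.natDegree :=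
  splits_iff_card_roots.mp hp.1

theorem nodup_roots (hp : IsSimplyRealRooted p) : p.roots.Nodup :=
  hp.2

theorem of_C_mul {c : ℝ} (hc : c ≠ 0) (hp : IsSimplyRealRooted (C c * p)) :
    IsSimplyRealRooted p := by
  rw [isSimplyRealRooted_iff_card_toFinset_roots] at hp ⊢
  rwa [roots_C_mul p hc, natDegree_C_mul hc] at hp

theorem comp_X_add_C (hp : IsSimplyRealRooted p) (c : ℝ) :
    IsSimplyRealRooted (p.comp (X + C c)) := by
  refine ⟨hp.1.comp_X_add_C c, ?_⟩
  have hmap : (p.comp (X + C c)).roots.map (· + c) = p.roots := by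
    simpa only [C_1, one_mul] using p.map_roots_comp_C_mul_X_add_C 1 c isUnit_one
  exact Multiset.Nodup.of_map _ (hmap ▸ hp.nodup_roots)

theorem eval_derivative_ne_zero (hp : IsSimplyRealRooted p) (h0 : p ≠ 0) {x : ℝ}
    (hx : p.eval x = 0) : (derivative p).eval x ≠ 0 := by
  intro hx'
  have hmult : 1 < p.rootMultiplicity x := (one_lt_rootMultiplicity_iff_isRoot h0).mpr ⟨hx, hx'⟩
  have hcount : p.roots.count x ≤ 1 := Multiset.nodup_iff_count_le_one.mp hp.nodup_roots x
  rw [count_roots] at hcount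
  lia

protected theorem derivative (hp : IsSimplyRealRooted p) :
    IsSimplyRealRooted (derivative p) := by
  rw [isSimplyRealRooted_iff_card_toFinset_roots] at hp ⊢
  have hrolle : p.roots.toFinset.card ≤ (Polynomial.derivative p).roots.toFinset.card + 1 :=
    card_roots_toFinset_le_derivative p
  have hdeg : (Polynomial.derivative p).natDegree ≤ p.natDegree - 1 := natDegree_derivative_le p
  have hle : (Polynomial.derivative p).roots.toFinset.card ≤ (Polynomial.derivative p).natDegree :=
    (Multiset.toFinset_card_le _).trans (Polynomial.card_roots' _)
  lia

theorem iterate_derivative (hp : IsSimplyRealRooted p) (k : ℕ) :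
    IsSimplyRealRooted (Polynomial.derivative^[k] p) := by
  induction k with
  | zero => exact hp
  | succ k ih =>
    rw [Function.iterate_succ_apply']
    exact ih.derivative

end IsSimplyRealRooted

/-- Laguerre's inequality. -/
theorem eval_mul_eval_derivative_derivative_le_sq {p : ℝ[X]} (hp : p.Splits) (x : ℝ) :
    p.eval x * (derivative (derivative p)).eval x ≤ (derivative p).eval x ^ 2 := by
  induction hp using Submonoid.closure_induction with
  | mem p hp => rcases hp with ⟨c, rfl⟩ | ⟨c, rfl⟩ <;> simp
  | one => simp
  | mul f g _ _ hf hg =>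
    have hsum : (derivative (f * g)).eval x ^ 2
          - (f * g).eval x * (derivative (derivative (f * g))).eval x
        = g.eval x ^ 2 * ((derivative f).eval x ^ 2
            - f.eval x * (derivative (derivative f)).eval x)
          + f.eval x ^ 2 * ((derivative g).eval x ^ 2
            - g.eval x * (derivative (derivative g)).eval x) := by
      simp only [derivative_mul, derivative_add, eval_mul, eval_add]
      ring
    have hf' := mul_nonneg (sq_nonneg (g.eval x)) (sub_nonneg.mpr hf)
    have hg' := mul_nonneg (sq_nonneg (f.eval x)) (sub_nonneg.mpr hg)
    linarith

theorem IsSimplyRealRooted.eval_mul_eval_derivative_derivative_neg {p : ℝ[X]}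
    (hp : IsSimplyRealRooted p) (hdeg : p.natDegree ≠ 0) {x : ℝ}
    (hx : (Polynomial.derivative p).eval x = 0) :
    p.eval x * (Polynomial.derivative (Polynomial.derivative p)).eval x < 0 := by
  have hp0 : p ≠ 0 := by
    rintro rfl
    exact hdeg natDegree_zero
  have hp0' : Polynomial.derivative p ≠ 0 := derivative_ne_zero.mpr hdeg
  have hpx : p.eval x ≠ 0 := fun h ↦ hp.eval_derivative_ne_zero hp0 h hx
  have hp''x : (Polynomial.derivative (Polynomial.derivative p)).eval x ≠ 0 :=
    hp.derivative.eval_derivative_ne_zero hp0' hx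
  have hle := eval_mul_eval_derivative_derivative_le_sq hp.1 x
  rw [hx, zero_pow two_ne_zero] at hle
  exact lt_of_le_of_ne hle (mul_ne_zero hpx hp''x)

/-! ### Sturm sequences -/

theorem exists_mem_Ioo_eq_zero_of_alternating {f : ℝ → ℝ} (hf : Continuous f) {m : ℕ}
    {s : Fin (m + 1) → ℝ} (hs : StrictMono s)
    (hsign : ∀ i : Fin (m + 1), 0 < (-1) ^ (i : ℕ) * f (s i)) :
    ∃ u : Fin m → ℝ, ∀ i, u i ∈ Set.Ioo (s i.castSucc) (s i.succ) ∧ f (u i) = 0 := by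
  suffices h : ∀ i : Fin m, ∃ x ∈ Set.Ioo (s i.castSucc) (s i.succ), f x = 0 by
    choose u hmem hzero using h
    exact ⟨u, fun i ↦ ⟨hmem i, hzero i⟩⟩
  intro i
  have hleft : 0 < (-1) ^ (i : ℕ) * f (s i.castSucc) := hsign i.castSucc
  have hright : (-1) ^ (i : ℕ) * f (s i.succ) < 0 := by
    have h := hsign i.succ
    rw [Fin.val_succ, pow_succ] at h
    linarith
  obtain ⟨x, hx, hfx⟩ := intermediate_value_Ioo' (f := fun x ↦ (-1) ^ (i : ℕ) * f x)
    (hs i.castSucc_lt_succ).le (by fun_prop) ⟨hright, hleft⟩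
  exact ⟨x, hx, (mul_eq_zero.mp hfx).resolve_left (pow_ne_zero _ (by norm_num))⟩

theorem exists_eq_C_mul_nodal {K ι : Type*} [Field K] {p : K[X]} {s : Finset ι} {t : ι → K}
    (ht : Set.InjOn t s) (hroot : ∀ i ∈ s, p.eval (t i) = 0) (hdeg : p.natDegree ≤ s.card) :
    ∃ c, p = C c * Lagrange.nodal s t := by
  have hdvd : Lagrange.nodal s t ∣ p := by
    refine Finset.prod_dvd_of_coprime (fun i hi j hj hij ↦ ?_)
      fun i hi ↦ dvd_iff_isRoot.mpr (hroot i hi)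
    exact isCoprime_X_sub_C_of_isUnit_sub (sub_ne_zero.mpr (ht.ne hi hj hij)).isUnit
  obtain ⟨g, rfl⟩ := hdvd
  rcases eq_or_ne g 0 with rfl | hg
  · exact ⟨0, by simp⟩
  rw [Lagrange.nodal_monic.natDegree_mul' hg, Lagrange.natDegree_nodal] at hdeg
  refine ⟨g.coeff 0, ?_⟩
  rw [mul_comm, ← eq_C_of_natDegree_eq_zero (by lia)]

theorem neg_one_pow_mul_eval_mul_eval_pos {p : ℝ[X]} {m : ℕ} {t : Fin m → ℝ}
    (ht : Function.Injective t) (hroot : ∀ l, p.eval (t l) = 0) (hdeg : p.natDegree ≤ m)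
    {a x : ℝ} (hpa : p.eval a ≠ 0) (hat : ∀ l, a < t l) {i : ℕ} (hi : i ≤ m)
    (hlt : ∀ l : Fin m, l < i → t l < x) (hgt : ∀ l : Fin m, i ≤ l → x < t l) :
    0 < (-1) ^ i * (p.eval x * p.eval a) := by
  obtain ⟨c, rfl⟩ := exists_eq_C_mul_nodal (s := univ) ht.injOn (fun l _ ↦ hroot l)
    (by simpa using hdeg)
  have hc : c ≠ 0 := by
    rintro rfl
    simp at hpa
  have hsign : (-1 : ℝ) ^ i = ∏ l : Fin m, if (l : ℕ) < i then -1 else 1 := by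
    rw [prod_ite, prod_const, prod_const_one, mul_one, Fin.card_filter_val_lt, min_eq_right hi]
  have hprod : 0 < (-1) ^ i * ((∏ l, (x - t l)) * ∏ l, (a - t l)) := by
    rw [hsign, ← prod_mul_distrib, ← prod_mul_distrib]
    refine prod_pos fun l _ ↦ ?_
    split_ifs with hl
    · nlinarith [hat l, hlt l hl]
    · nlinarith [hat l, hgt l (not_lt.mp hl)]
  simp only [eval_mul, eval_C, Lagrange.eval_nodal]
  have := mul_pos (pow_pos (abs_pos.mpr hc) 2) hprod
  rw [sq_abs] at this
  linarith

theorem eventually_atTop_mul_eval_pos {p : ℝ[X]} {m : ℕ} {c : ℝ} (hdeg : p.natDegree ≤ m)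
    (hcoeff : 0 < c * p.coeff m) : ∀ᶠ x in Filter.atTop, 0 < c * p.eval x := by
  have hcm : p.natDegree = m :=
    natDegree_eq_of_le_of_coeff_ne_zero hdeg (right_ne_zero_of_mul hcoeff.ne')
  subst hcm
  rcases Nat.eq_zero_or_pos p.natDegree with h0 | hpos
  · rw [eq_C_of_natDegree_eq_zero h0] at hcoeff ⊢
    exact Filter.Eventually.of_forall fun x ↦ by simpa using hcoeff
  · have hlead : 0 < (C c * p).leadingCoeff := by
      rwa [leadingCoeff_mul, leadingCoeff_C]
    have hdeg' : 0 < (C c * p).degree := by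
      rwa [degree_C_mul (left_ne_zero_of_mul hcoeff.ne'), ← natDegree_pos_iff_degree_pos]
    have htop := tendsto_atTop_of_leadingCoeff_nonneg (C c * p) hdeg' hlead.le
    simpa using htop.eventually_gt_atTop 0

theorem strictMono_snoc {α : Type*} [Preorder α] {n : ℕ} {f : Fin n → α} {b : α}
    (hf : StrictMono f) (hb : ∀ i, f i < b) : StrictMono (Fin.snoc f b : Fin (n + 1) → α) := by
  intro i j hij
  induction i using Fin.lastCases with
  | last => exact absurd hij j.le_last.not_gt
  | cast i =>
    induction j using Fin.lastCases with
    | last => simpa only [Fin.snoc_castSucc, Fin.snoc_last] using hb i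
    | cast j => simpa only [Fin.snoc_castSucc] using hf (Fin.castSucc_lt_castSucc_iff.mp hij)

theorem exists_interlacing_zeros {r : ℝ[X]} {m : ℕ} {a : ℝ} {t : Fin m → ℝ} (ht : StrictMono t)
    (hat : ∀ i, a < t i) (hra : 0 < r.eval a)
    (hrt : ∀ i : Fin m, 0 < (-1) ^ (i : ℕ) * (-r).eval (t i)) (hrdeg : r.natDegree ≤ m + 1)
    (hrcoeff : 0 < (-1) ^ (m + 1) * r.coeff (m + 1)) :
    ∃ u : Fin (m + 1) → ℝ, StrictMono u ∧ ∀ i, a < u i ∧ r.eval (u i) = 0 ∧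
      (∀ l : Fin m, (l : ℕ) < i → t l < u i) ∧ ∀ l : Fin m, (i : ℕ) ≤ l → u i < t l := by
  obtain ⟨M, hrM, hMa, hMt⟩ : ∃ M, 0 < (-1) ^ (m + 1) * r.eval M ∧ a < M ∧ ∀ i, t i < M :=
    ((eventually_atTop_mul_eval_pos hrdeg hrcoeff).and ((Filter.eventually_gt_atTop a).and
      (Filter.eventually_all.mpr fun i ↦ Filter.eventually_gt_atTop (t i)))).exists
  let s : Fin (m + 2) → ℝ := Fin.cons a (Fin.snoc t M)
  have hs_t (l : Fin m) : s l.castSucc.succ = t l := by simp [s]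
  have hs_last : s (Fin.last m).succ = M := by simp only [s, Fin.cons_succ, Fin.snoc_last]
  have hs : StrictMono s := Fin.strictMono_cons.mpr
    ⟨Fin.lastCases (by simpa using hMa) (by simpa using hat), strictMono_snoc ht hMt⟩
  have hsign (i : Fin (m + 2)) : 0 < (-1) ^ (i : ℕ) * r.eval (s i) := by
    induction i using Fin.cases with
    | zero => simpa [s] using hra
    | succ i =>
      induction i using Fin.lastCases with
      | last => rwa [hs_last]
      | cast l =>
        rw [hs_t, Fin.val_succ, pow_succ]
        simpa using hrt l
  obtain ⟨u, hu⟩ := exists_mem_Ioo_eq_zero_of_alternating r.continuous hs hsign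
  have hlt {i : Fin (m + 2)} {j : Fin (m + 1)} (hij : i ≤ j.castSucc) : s i < u j :=
    (hs.monotone hij).trans_lt (hu j).1.1
  have hgt {i : Fin (m + 1)} {j : Fin (m + 2)} (hij : i.succ ≤ j) : u i < s j :=
    (hu i).1.2.trans_le (hs.monotone hij)
  refine ⟨u, fun i j hij ↦ ?_,
    fun i ↦ ⟨hlt (Fin.zero_le _), (hu i).2, fun l hl ↦ ?_, fun l hl ↦ ?_⟩⟩
  · exact (hgt le_rfl).trans (hlt (Fin.succ_le_castSucc_iff.mpr hij))
  · exact hs_t l ▸ hlt (Fin.succ_le_castSucc_iff.mpr hl)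
  · exact hs_t l ▸ hgt (Fin.succ_le_succ_iff.mpr hl)

/-- `p` has `m` distinct zeros in `(a, ∞)` at which, in increasing order, the values of `r` are
nonzero and alternate in sign, the first one being positive. When `m` is the degree of `p`, this is
the form in which interlacing of the zeros of `p` and `r` enters Sturm's argument. -/
def AlternatesAtZeros (a : ℝ) (m : ℕ) (p r : ℝ[X]) : Prop :=
  ∃ t : Fin m → ℝ, StrictMono t ∧
    ∀ i, a < t i ∧ p.eval (t i) = 0 ∧ 0 < (-1) ^ (i : ℕ) * r.eval (t i)

namespace AlternatesAtZeros

variable {a : ℝ} {m : ℕ} {p r : ℝ[X]}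

theorem isSimplyRealRooted (h : AlternatesAtZeros a m p r) (hdeg : p.natDegree ≤ m) :
    IsSimplyRealRooted p := by
  obtain ⟨t, ht, hprop⟩ := h
  exact isSimplyRealRooted_of_injective ht.injective (fun i ↦ (hprop i).2.1) hdeg

theorem of_eval_mul_eval_neg {q : ℝ[X]} (h : AlternatesAtZeros a m p r)
    (hneg : ∀ x, a < x → p.eval x = 0 → r.eval x * q.eval x < 0) :
    AlternatesAtZeros a m p (-q) := by
  obtain ⟨t, ht, hprop⟩ := h
  refine ⟨t, ht, fun i ↦ ?_⟩
  obtain ⟨hat, hzero, hsign⟩ := hprop i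
  have hrq := hneg (t i) hat hzero
  refine ⟨hat, hzero, pos_of_mul_pos_right ?_ hsign.le⟩
  have hsq : (-1 : ℝ) ^ (i : ℕ) * (-1) ^ (i : ℕ) = 1 := by
    rw [← mul_pow, neg_one_mul, neg_neg, one_pow]
  calc 0 < -(r.eval (t i) * q.eval (t i)) := neg_pos.mpr hrq
    _ = (-1) ^ (i : ℕ) * r.eval (t i) * ((-1) ^ (i : ℕ) * (-q).eval (t i)) := by
      rw [eval_neg]
      linear_combination (r.eval (t i) * q.eval (t i)) * hsq

theorem succ (h : AlternatesAtZeros a m p (-r)) (hpdeg : p.natDegree ≤ m) (hpa : 0 < p.eval a)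
    (hrdeg : r.natDegree ≤ m + 1) (hra : 0 < r.eval a)
    (hrcoeff : 0 < (-1) ^ (m + 1) * r.coeff (m + 1)) : AlternatesAtZeros a (m + 1) r p := by
  obtain ⟨t, ht, hprop⟩ := h
  choose hat hpt hrt using hprop
  obtain ⟨u, hu, hprop⟩ := exists_interlacing_zeros ht hat hra hrt hrdeg hrcoeff
  choose hau hru hlt hgt using hprop
  refine ⟨u, hu, fun i ↦ ⟨hau i, hru i, pos_of_mul_pos_left (b := p.eval a) ?_ hpa.le⟩⟩
  rw [mul_assoc]
  exact neg_one_pow_mul_eval_mul_eval_pos ht.injective hpt hpdeg hpa.ne' hat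
    (Nat.lt_succ_iff.mp i.isLt) (hlt i) (hgt i)

end AlternatesAtZeros

/-- The polynomials `q 0, …, q N` form a Sturm sequence on `(a, ∞)`: `q j` has degree `j`, all
`q j` are positive at `a` and have sign `(-1) ^ j` at infinity, and wherever an inner member of the
sequence vanishes its two neighbours have opposite signs. -/
structure IsSturmSequence (a : ℝ) (N : ℕ) (q : ℕ → ℝ[X]) : Prop where
  natDegree_le : ∀ j ≤ N, (q j).natDegree ≤ j
  coeff_pos : ∀ j ≤ N, 0 < (-1) ^ j * (q j).coeff j
  eval_pos : ∀ j ≤ N, 0 < (q j).eval a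
  eval_mul_eval_neg : ∀ j, j + 2 ≤ N → ∀ x, a < x → (q (j + 1)).eval x = 0 →
    (q j).eval x * (q (j + 2)).eval x < 0

namespace IsSturmSequence

variable {a : ℝ} {N : ℕ} {q : ℕ → ℝ[X]}

theorem natDegree_eq (hq : IsSturmSequence a N q) {j : ℕ} (hj : j ≤ N) : (q j).natDegree = j :=
  natDegree_eq_of_le_of_coeff_ne_zero (hq.natDegree_le j hj)
    (right_ne_zero_of_mul (hq.coeff_pos j hj).ne')

theorem alternatesAtZeros_succ (hq : IsSturmSequence a N q) {j : ℕ} (hj : j + 1 ≤ N) :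
    AlternatesAtZeros a (j + 1) (q (j + 1)) (q j) := by
  have extend {j : ℕ} (hj : j + 1 ≤ N) (h : AlternatesAtZeros a j (q j) (-q (j + 1))) :
      AlternatesAtZeros a (j + 1) (q (j + 1)) (q j) :=
    h.succ (hq.natDegree_le j (by lia)) (hq.eval_pos j (by lia)) (hq.natDegree_le _ hj)
      (hq.eval_pos _ hj) (hq.coeff_pos _ hj)
  induction j with
  | zero => exact extend hj ⟨Fin.elim0, fun i ↦ i.elim0, fun i ↦ i.elim0⟩
  | succ j ih => exact extend hj ((ih (by lia)).of_eval_mul_eval_neg (hq.eval_mul_eval_neg j hj))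

theorem isSimplyRealRooted (hq : IsSturmSequence a N q) {j : ℕ} (hj : j ≤ N) :
    IsSimplyRealRooted (q j) := by
  cases j with
  | zero =>
    exact isSimplyRealRooted_of_injective (t := Fin.elim0) (fun i ↦ i.elim0) (fun i ↦ i.elim0)
      (hq.natDegree_le 0 hj)
  | succ j => exact (hq.alternatesAtZeros_succ hj).isSimplyRealRooted (hq.natDegree_le _ hj)

end IsSturmSequence

/-! ### Charlier polynomials -/

section Charlier

variable {K : Type*} [Field K]

/-- The Charlier polynomial of degree `n` with parameter `a`, in the variable `y` and normalized so
that `∑ n, charlier a n * t ^ n = exp (-a * t) * (1 + t) ^ y`. -/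
noncomputable def charlier (a : K) (n : ℕ) : K[X] :=
  ∑ ij ∈ antidiagonal n,
    C ((-a) ^ ij.1 / ((ij.1.factorial : K) * (ij.2.factorial : K))) * descPochhammer K ij.2

theorem natDegree_charlier_le (a : K) (n : ℕ) : (charlier a n).natDegree ≤ n := by
  refine natDegree_sum_le_of_forall_le _ _ fun ij hij ↦ (natDegree_C_mul_le _ _).trans ?_
  rw [descPochhammer_natDegree]
  exact HasAntidiagonal.antidiagonal.snd_le hij

theorem coeff_charlier_self (a : K) (n : ℕ) : (charlier a n).coeff n = (n.factorial : K)⁻¹ := by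
  have hlead : (descPochhammer K n).coeff n = 1 := by
    simpa [descPochhammer_natDegree] using (monic_descPochhammer K n).coeff_natDegree
  rw [charlier, finsetSum_coeff, sum_eq_single (0, n)]
  · simp [hlead]
  · intro ij hij hne
    rw [coeff_C_mul, coeff_eq_zero_of_natDegree_lt, mul_zero]
    rw [descPochhammer_natDegree]
    grind [HasAntidiagonal.mem_antidiagonal]
  · simp

theorem natDegree_charlier [CharZero K] (a : K) (n : ℕ) : (charlier a n).natDegree = n :=
  natDegree_eq_of_le_of_coeff_ne_zero (natDegree_charlier_le a n) <| by
    rw [coeff_charlier_self]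
    exact inv_ne_zero (Nat.cast_ne_zero.mpr n.factorial_ne_zero)

theorem eval_zero_charlier (a : K) (n : ℕ) :
    (charlier a n).eval 0 = (-a) ^ n / n.factorial := by
  rw [charlier, eval_finsetSum, sum_eq_single (n, 0)]
  · simp
  · intro ij hij hne
    rw [eval_mul, descPochhammer_ne_zero_eval_zero, mul_zero]
    grind [HasAntidiagonal.mem_antidiagonal]
  · simp

variable [CharZero K]

theorem choose_eq_eval_descPochhammer_div (y : K) (n : ℕ) :
    Ring.choose y n = (descPochhammer K n).eval y / n.factorial := by
  rw [Ring.choose_eq_smul, ← descPochhammer_map (Int.castRingHom K), eval_map,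
    ← algebraMap_int_eq, ← aeval_def, aeval_eq_smeval, smul_eq_mul, inv_mul_eq_div]

section GeneratingFunction

open PowerSeries (binomialSeries rescale exp derivative)

theorem derivative_rescale_exp (a : K) :
    derivative K (rescale a (exp K)) = PowerSeries.C a * rescale a (exp K) := by
  ext n
  have hn : (n.factorial : K) ≠ 0 := Nat.cast_ne_zero.mpr n.factorial_ne_zero
  simp only [PowerSeries.coeff_derivative, PowerSeries.coeff_C_mul, PowerSeries.coeff_rescale,
    PowerSeries.coeff_exp, Nat.factorial_succ, map_div₀, map_one, map_natCast]
  push_cast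
  field_simp
  ring

theorem one_add_X_mul_derivative_binomialSeries (y : K) :
    (1 + PowerSeries.X) * derivative K (binomialSeries K y)
      = PowerSeries.C y * binomialSeries K y := by
  have hchoose (j : ℕ) : Ring.choose y (j + 1) * (j + 1) = (y - j) * Ring.choose y j := by
    simpa [mul_comm] using Ring.choose_smul_choose y j.le_succ
  ext j
  cases j with
  | zero =>
    simp only [add_mul, one_mul, map_add, PowerSeries.coeff_C_mul, PowerSeries.coeff_zero_X_mul,
      PowerSeries.coeff_derivative, PowerSeries.binomialSeries_coeff, smul_eq_mul, mul_one]
    simp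
  | succ j =>
    simp only [add_mul, one_mul, map_add, PowerSeries.coeff_C_mul, PowerSeries.coeff_succ_X_mul,
      PowerSeries.coeff_derivative, PowerSeries.binomialSeries_coeff, smul_eq_mul, mul_one]
    have := hchoose (j + 1)
    push_cast at this ⊢
    linear_combination this

theorem eval_charlier (a y : K) (n : ℕ) :
    (charlier a n).eval y = PowerSeries.coeff n (rescale (-a) (exp K) * binomialSeries K y) := by
  rw [charlier, eval_finsetSum, PowerSeries.coeff_mul]
  refine sum_congr rfl fun ij _ ↦ ?_
  simp only [eval_mul, eval_C, PowerSeries.coeff_rescale, PowerSeries.coeff_exp, map_div₀, map_one,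
    map_natCast, PowerSeries.binomialSeries_coeff, choose_eq_eval_descPochhammer_div, smul_eq_mul,
    mul_one]
  ring

theorem eval_charlier_succ_succ (a y : K) (n : ℕ) :
    (n + 2) * (charlier a (n + 2)).eval y
      = (y - (n + 1) - a) * (charlier a (n + 1)).eval y - a * (charlier a n).eval y := by
  set G := rescale (-a) (exp K) * binomialSeries K y with hG
  have hode : (1 + PowerSeries.X) * derivative K G
      = PowerSeries.C (y - a) * G - PowerSeries.C a * (PowerSeries.X * G) := by
    rw [hG, Derivation.leibniz, derivative_rescale_exp, smul_eq_mul, smul_eq_mul, map_neg, map_sub]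
    linear_combination
      rescale (-a) (exp K) * one_add_X_mul_derivative_binomialSeries y
  have hcoeff := congrArg (PowerSeries.coeff (n + 1)) hode
  simp only [add_mul, one_mul, map_add, map_sub, sub_mul, PowerSeries.coeff_C_mul,
    PowerSeries.coeff_succ_X_mul, PowerSeries.coeff_derivative, hG, ← eval_charlier] at hcoeff
  push_cast at hcoeff
  linear_combination hcoeff

end GeneratingFunction

theorem eval_charlier_ne_zero_or_eval_charlier_succ_ne_zero {a : K} (ha : a ≠ 0) (y : K) (n : ℕ) :
    (charlier a n).eval y ≠ 0 ∨ (charlier a (n + 1)).eval y ≠ 0 := by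
  induction n with
  | zero => simp [charlier]
  | succ n ih =>
    by_contra! h
    have hrec := eval_charlier_succ_succ a y n
    rw [h.1, h.2] at hrec
    have hzero : (charlier a n).eval y = 0 := by simpa [ha] using hrec
    simp [hzero, h.1] at ih

end Charlier

theorem isSturmSequence_charlier {a : ℝ} (ha : 0 < a) (N : ℕ) :
    IsSturmSequence 0 N fun j ↦ C ((-1) ^ j) * charlier a j where
  natDegree_le j _ := (natDegree_C_mul_le _ _).trans (natDegree_charlier_le a j)
  coeff_pos j _ := by
    rw [coeff_C_mul, coeff_charlier_self, ← mul_assoc, ← mul_pow, neg_one_mul, neg_neg, one_pow]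
    positivity
  eval_pos j _ := by
    rw [eval_mul, eval_C, eval_zero_charlier, ← mul_div_assoc, ← mul_pow, neg_one_mul, neg_neg]
    positivity
  eval_mul_eval_neg j _ y _ hy := by
    simp only [eval_mul, eval_C] at hy ⊢
    have hy' : (charlier a (j + 1)).eval y = 0 := by simpa using hy
    have hne : (charlier a j).eval y ≠ 0 :=
      (eval_charlier_ne_zero_or_eval_charlier_succ_ne_zero ha.ne' y j).resolve_right (· hy')
    have hrec : (j + 2) * (charlier a (j + 2)).eval y = -(a * (charlier a j).eval y) := by
      rw [eval_charlier_succ_succ, hy']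
      ring
    have hprod : (charlier a j).eval y * (charlier a (j + 2)).eval y < 0 := by
      refine neg_of_mul_neg_right (a := (j + 2 : ℝ)) ?_ (by positivity)
      calc (j + 2) * ((charlier a j).eval y * (charlier a (j + 2)).eval y)
          = -(a * (charlier a j).eval y ^ 2) := by linear_combination (charlier a j).eval y * hrec
        _ < 0 := by simp only [Left.neg_neg_iff]; positivity
    have hsign : (-1 : ℝ) ^ j * (-1) ^ (j + 2) = 1 := by
      rw [← pow_add]
      exact Even.neg_one_pow ⟨j + 1, by ring⟩
    linear_combination hprod + (charlier a j).eval y * (charlier a (j + 2)).eval y * hsign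

theorem isSimplyRealRooted_charlier {a : ℝ} (ha : 0 < a) (n : ℕ) :
    IsSimplyRealRooted (charlier a n) :=
  ((isSturmSequence_charlier ha n).isSimplyRealRooted le_rfl).of_C_mul (pow_ne_zero n (by simp))

/-! ### Laguerre polynomials -/

theorem natDegree_iterate_derivative_eq {R : Type*} [Semiring R] [IsAddTorsionFree R] (p : R[X])
    (k : ℕ) : (derivative^[k] p).natDegree = p.natDegree - k := by
  induction k with
  | zero => rfl
  | succ k ih => rw [Function.iterate_succ_apply', natDegree_derivative, ih, Nat.sub_sub]

theorem eval_iterate_derivative_prod_X_add_C_pos {R ι : Type*} [CommRing R] [LinearOrder R]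
    [IsStrictOrderedRing R] {s : Finset ι} {f : ι → R} {z : R} (hf : ∀ i ∈ s, 0 < z + f i) {k : ℕ}
    (hk : k ≤ s.card) : 0 < (derivative^[k] (∏ i ∈ s, (X + C (f i)))).eval z := by
  have htaylor : taylor z (∏ i ∈ s, (X + C (f i))) = ∏ i ∈ s, (X + C (z + f i)) := by
    rw [taylor_apply, Polynomial.prod_comp]
    exact prod_congr rfl fun i _ ↦ by simp [add_assoc]
  have hcoeff : (∏ i ∈ s, (X + C (z + f i))).coeff k
      = ∑ t ∈ s.powersetCard (s.card - k), ∏ i ∈ t, (z + f i) :=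
    prod_X_add_C_coeff s (fun i ↦ z + f i) hk
  rw [← factorial_smul_hasseDeriv, LinearMap.smul_apply, eval_smul, ← taylor_coeff, htaylor, hcoeff]
  refine nsmul_pos (sum_pos (fun t ht ↦ prod_pos fun i hi ↦ hf i ?_) ?_) k.factorial_ne_zero
  · exact (mem_powersetCard.mp ht).1 hi
  · exact powersetCard_nonempty.mpr (Nat.sub_le _ _)

theorem prod_Icc_X_add_C_eq_descPochhammer_comp {R : Type*} [CommRing R] {i n : ℕ} (hi : i ≤ n) :
    ∏ j ∈ Icc (i + 1) n, (X + C (j : R)) = (descPochhammer R (n - i)).comp (X + C (n : R)) := by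
  rw [Polynomial.comp, eval₂_eq_eval_map, descPochhammer_map, descPochhammer_eval_eq_prod_range]
  refine prod_nbij' (n - ·) (n - ·) (by grind) (by grind) (by grind) (by grind) fun j hj ↦ ?_
  rw [Nat.cast_sub (mem_Icc.mp hj).2, C_eq_natCast, C_eq_natCast]
  ring

theorem map_evalRingHom_laguerreBiv (n : ℕ) (x : ℝ) :
    (laguerreBiv n).map (evalRingHom x) = (charlier x n).comp (X + C (n : ℝ)) := by
  rw [laguerreBiv, charlier, Finset.Nat.sum_antidiagonal_eq_sum_range_succ_mk, Polynomial.map_sum,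
    Polynomial.sum_comp]
  refine sum_congr rfl fun i hi ↦ ?_
  rw [mul_comp, C_comp, ← prod_Icc_X_add_C_eq_descPochhammer_comp (mem_range_succ_iff.mp hi),
    neg_pow x, mul_div_right_comm, C_mul, C_pow]
  simp [Polynomial.map_prod]

theorem natDegree_map_evalRingHom_laguerreBiv (n : ℕ) (x : ℝ) :
    ((laguerreBiv n).map (evalRingHom x)).natDegree = n := by
  rw [map_evalRingHom_laguerreBiv, natDegree_comp, natDegree_X_add_C, mul_one, natDegree_charlier]

theorem isSimplyRealRooted_map_evalRingHom_laguerreBiv (n : ℕ) {x : ℝ} (hx : 0 < x) :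
    IsSimplyRealRooted ((laguerreBiv n).map (evalRingHom x)) := by
  rw [map_evalRingHom_laguerreBiv]
  exact (isSimplyRealRooted_charlier hx n).comp_X_add_C n

theorem eval_laguerreDz (n k : ℕ) (x z : ℝ) :
    (laguerreDz n k z).eval x
      = (derivative^[k] ((laguerreBiv n).map (evalRingHom x))).eval z := by
  rw [laguerreDz, iterate_derivative_map, map_evalRingHom_eval]

theorem laguerreDz_eq_sum_monomial (n k : ℕ) (z : ℝ) :
    laguerreDz n k z = ∑ i ∈ range (n + 1), monomial i ((-1) ^ i / (i.factorial * (n - i).factorial)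
      * (derivative^[k] (∏ j ∈ Icc (i + 1) n, (X + C (j : ℝ)))).eval z) := by
  rw [laguerreDz, laguerreBiv, iterate_derivative_sum, eval_finsetSum]
  refine sum_congr rfl fun i _ ↦ ?_
  have hprod : ∏ j ∈ Icc (i + 1) n, (X + C (C (j : ℝ)))
      = (∏ j ∈ Icc (i + 1) n, (X + C (j : ℝ))).map C := by
    simp [Polynomial.map_prod]
  rw [hprod, iterate_derivative_C_mul, iterate_derivative_map, eval_mul, eval_C, eval_map,
    eval₂_at_apply, C_mul_X_pow_eq_monomial, monomial_mul_C]

theorem natDegree_laguerreDz_le (n k : ℕ) (z : ℝ) : (laguerreDz n k z).natDegree ≤ n - k := by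
  rw [laguerreDz_eq_sum_monomial]
  refine natDegree_sum_le_of_forall_le _ _ fun i hi ↦ ?_
  rcases le_or_gt i (n - k) with hik | hik
  · exact (natDegree_monomial_le _).trans hik
  · rw [iterate_derivative_eq_zero]
    · simp
    · rw [natDegree_prod_of_monic _ _ fun j _ ↦ monic_X_add_C _]
      simp only [natDegree_X_add_C, sum_const, Nat.card_Icc, smul_eq_mul]
      have := mem_range.mp hi
      lia

theorem neg_one_pow_mul_coeff_laguerreDz_pos {n k i : ℕ} (hik : i + k ≤ n) {z : ℝ} (hz : -1 < z) :
    0 < (-1) ^ i * (laguerreDz n k z).coeff i := by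
  have hpos : 0 < (derivative^[k] (∏ j ∈ Icc (i + 1) n, (X + C (j : ℝ)))).eval z := by
    refine eval_iterate_derivative_prod_X_add_C_pos (fun j hj ↦ ?_) ?_
    · have hj : 1 ≤ j := Nat.le_of_add_left_le (mem_Icc.mp hj).1
      have : (1 : ℝ) ≤ j := by exact_mod_cast hj
      linarith
    · rw [Nat.card_Icc]
      lia
  have hi : i ∈ range (n + 1) := mem_range.mpr (by lia)
  rw [laguerreDz_eq_sum_monomial, finsetSum_coeff]
  simp only [coeff_monomial, sum_ite_eq', hi, if_true]
  rw [← mul_assoc, ← mul_div_assoc, ← mul_pow, neg_one_mul, neg_neg, one_pow]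
  positivity

theorem isSturmSequence_laguerreDz (n : ℕ) {z : ℝ} (hz : -1 < z) :
    IsSturmSequence 0 n fun j ↦ laguerreDz n (n - j) z where
  natDegree_le j hj := (natDegree_laguerreDz_le n (n - j) z).trans_eq (Nat.sub_sub_self hj)
  coeff_pos j hj := neg_one_pow_mul_coeff_laguerreDz_pos (by lia) hz
  eval_pos j hj := by
    rw [← coeff_zero_eq_eval_zero]
    simpa using neg_one_pow_mul_coeff_laguerreDz_pos (i := 0) (by lia : 0 + (n - j) ≤ n) hz
  eval_mul_eval_neg j hj x hx hzero := by
    have h1 : n - (j + 1) = n - (j + 2) + 1 := by lia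
    have h2 : n - j = n - (j + 2) + 2 := by lia
    have hsimple := (isSimplyRealRooted_map_evalRingHom_laguerreBiv n hx).iterate_derivative
      (n - (j + 2))
    simp only [eval_laguerreDz, h1, h2, Function.iterate_succ_apply'] at hzero ⊢
    rw [mul_comm]
    refine hsimple.eval_mul_eval_derivative_derivative_neg ?_ hzero
    rw [natDegree_iterate_derivative_eq, natDegree_map_evalRingHom_laguerreBiv]
    lia

/-- For z > -1 and k <= n, the polynomial in x obtained as the k-th z-derivative of L_n
has degree n - k and all of its roots are real and simple. -/
theorem laguerreDz_real_rooted (n k : Nat) (hk : k ≤ n) (z : Real) (hz : -1 < z) :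
    (laguerreDz n k z).natDegree = n - k ∧
    (laguerreDz n k z).roots.card = n - k ∧
    (laguerreDz n k z).roots.Nodup := by
  have hsturm := isSturmSequence_laguerreDz n hz
  have hdeg : (laguerreDz n k z).natDegree = n - k := by
    simpa only [Nat.sub_sub_self hk] using hsturm.natDegree_eq (Nat.sub_le n k)
  have hsimple : IsSimplyRealRooted (laguerreDz n k z) := by
    simpa only [Nat.sub_sub_self hk] using hsturm.isSimplyRealRooted (Nat.sub_le n k)
  exact ⟨hdeg, hsimple.card_roots.trans hdeg, hsimple.nodup_roots⟩
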